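/- arXiv:2407.16673 — 2 statements merged into one kernel-verified Lean document; each statement's English description precedes it below -/
import Mathlib

section
/- Let (M, 𝔅, μ) be a probability space and f : M → M a measure-preserving measurable map such that μ is ergodic for f. Let V_1, …, V_m be pairwise disjoint measurable sets with ∪_{j=1}^m V_j = M and μ(V_j) > 0 for every j. Define the m × m matrix P by P_{i,j} = μ(f⁻¹(V_i) ∩ V_j) / μ(V_j). Then for every nonempty proper subset J ⊊ {1,…,m} there exist j ∈ J and i ∉ J with P_{i,j} > 0. In other words, no coordinate subspace spanned by a proper nonempty subset of the standard basis vectors of ℝ^m is invariant under P. -/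
/-!
If no transition leaves `J`, then the union `A` of the cells indexed by `J` satisfies `A ⊆ f⁻¹(A)`
up to a null set. Since `f` preserves `μ` and `μ(A) < ∞`, this inclusion is an equality mod `μ`, so
ergodicity makes `A` null or conull. Neither is possible: `A` contains a cell of positive measure
because `J` is nonempty, and misses one because `J` is proper.
-/

open MeasureTheory

section

variable {α β : Type*} [MeasurableSpace α] [MeasurableSpace β] {μ : Measure α} {ν : Measure β}

theorem measure_compl_ne_zero_of_aedisjoint {s t : Set α} (hst : AEDisjoint μ s t)
    (hs : μ s ≠ 0) : μ tᶜ ≠ 0 := fun ht =>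
  hs (hst.measure_sdiff_left ▸ measure_mono_null (fun _ hx => hx.2) ht)

theorem measure_sdiff_preimage_ne_zero_of_ergodic {f : α → α} (hf : Ergodic f μ) {s : Set α}
    (hs : NullMeasurableSet s μ) (hfin : μ s ≠ ⊤) (hs₀ : μ s ≠ 0) (hsc₀ : μ sᶜ ≠ 0) :
    μ (s \ f ⁻¹' s) ≠ 0 := fun hnull =>
  (hf.ae_empty_or_univ_of_ae_le_preimage' hs (ae_le_set.mpr hnull) hfin).elim
    (fun h => hs₀ (ae_eq_empty.mp h)) (fun h => hsc₀ (ae_eq_univ.mp h))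

theorem exists_measure_preimage_inter_ne_zero {ι κ : Type*} [Countable ι] [Countable κ]
    {f : α → β} (hf : Measure.QuasiMeasurePreserving f μ ν) {V : ι → Set α} {W : κ → Set β}
    (hcover : (⋃ k, W k) =ᵐ[ν] Set.univ) {J : Set ι} {K : Set κ}
    (hne : μ ((⋃ j ∈ J, V j) \ f ⁻¹' (⋃ k ∈ K, W k)) ≠ 0) :
    ∃ j ∈ J, ∃ k ∉ K, μ (f ⁻¹' W k ∩ V j) ≠ 0 := by
  by_contra! hnull
  have hunion : μ (⋃ j ∈ J, ⋃ k ∈ Kᶜ, f ⁻¹' W k ∩ V j) = 0 :=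
    (measure_biUnion_null_iff J.to_countable).mpr fun j hj =>
      (measure_biUnion_null_iff Kᶜ.to_countable).mpr (hnull j hj)
  have hW : ∀ᵐ x ∂μ, ∃ k, f x ∈ W k := by
    filter_upwards [hf.ae (Filter.eventuallyEq_univ.mp hcover)] with x hx
    exact Set.mem_iUnion.mp hx
  refine hne (measure_mono_null_ae ?_ hunion)
  filter_upwards [hW] with x ⟨k, hk⟩ ⟨hxV, hxW⟩
  obtain ⟨j, hj, hxj⟩ := Set.mem_iUnion₂.mp hxV
  have hkK : k ∉ K := fun hkK => hxW (Set.mem_iUnion₂.mpr ⟨k, hkK, hk⟩)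
  exact Set.mem_iUnion₂.mpr ⟨j, hj, Set.mem_iUnion₂.mpr ⟨k, hkK, hk, hxj⟩⟩

end

theorem ergodic_partition_matrix_irreducible_general
    {M ι : Type*} [MeasurableSpace M] [Countable ι] {μ : Measure M} {f : M → M}
    (herg : Ergodic f μ) {V : ι → Set M} (hmeas : ∀ j, NullMeasurableSet (V j) μ)
    (hdisj : Pairwise (Function.onFun (AEDisjoint μ) V))
    (hcover : (⋃ j, V j) =ᵐ[μ] Set.univ) (hpos : ∀ j, 0 < μ (V j)) {P : Matrix ι ι ℝ}
    (hP : ∀ i j, P i j = (μ (f ⁻¹' V i ∩ V j)).toReal / (μ (V j)).toReal)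
    {J : Set ι} (hJ : J.Nonempty) (hJu : J ≠ Set.univ) (hfin : μ (⋃ j ∈ J, V j) ≠ ⊤) :
    ∃ j ∈ J, ∃ i ∉ J, 0 < P i j := by
  have hA : NullMeasurableSet (⋃ j ∈ J, V j) μ :=
    .biUnion J.to_countable fun j _ => hmeas j
  have hA₀ : μ (⋃ j ∈ J, V j) ≠ 0 := by
    obtain ⟨j, hj⟩ := hJ
    exact ((hpos j).trans_le (measure_mono (Set.subset_biUnion_of_mem hj))).ne'
  have hAc₀ : μ (⋃ j ∈ J, V j)ᶜ ≠ 0 := by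
    obtain ⟨i, hi⟩ := (Set.ne_univ_iff_exists_notMem J).mp hJu
    refine measure_compl_ne_zero_of_aedisjoint (s := V i) ?_ (hpos i).ne'
    simp only [AEDisjoint.iUnion_right_iff]
    exact fun j hj => hdisj (ne_of_mem_of_not_mem hj hi).symm
  obtain ⟨j, hj, i, hi, hij⟩ := exists_measure_preimage_inter_ne_zero
    herg.quasiMeasurePreserving hcover
    (measure_sdiff_preimage_ne_zero_of_ergodic herg hA hfin hA₀ hAc₀)
  have hVj : μ (V j) ≠ ⊤ := measure_ne_top_of_subset (Set.subset_biUnion_of_mem hj) hfin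
  refine ⟨j, hj, i, hi, ?_⟩
  rw [hP]
  exact div_pos (ENNReal.toReal_pos hij (measure_ne_top_of_subset Set.inter_subset_right hVj))
    (ENNReal.toReal_pos (hpos j).ne' hVj)

/-- Irreducibility part of Lemma 4.2: for an ergodic system and a finite measurable
partition into cells of positive measure, the induced transition matrix
`P i j = μ(f⁻¹ V_i ∩ V_j) / μ(V_j)` admits no invariant coordinate subspace: from every
nonempty proper subset `J` of indices there is a positive transition leaving `J`. -/
theorem ergodic_partition_matrix_irreducible
    {M : Type*} [MeasurableSpace M] (μ : Measure M) [IsProbabilityMeasure μ]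
    (f : M → M) (herg : Ergodic f μ)
    {m : ℕ} (V : Fin m → Set M) (hmeas : ∀ j, MeasurableSet (V j))
    (hdisj : Pairwise (Function.onFun Disjoint V))
    (hcover : (⋃ j, V j) = Set.univ)
    (hpos : ∀ j, 0 < μ (V j))
    (P : Matrix (Fin m) (Fin m) ℝ)
    (hP : ∀ i j, P i j = (μ (f ⁻¹' V i ∩ V j)).toReal / (μ (V j)).toReal) :
    ∀ J : Finset (Fin m), J.Nonempty → J ≠ Finset.univ →
      ∃ j ∈ J, ∃ i ∉ J, 0 < P i j := fun _ hJ hJu =>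
  ergodic_partition_matrix_irreducible_general herg (fun j => (hmeas j).nullMeasurableSet)
    hdisj.aedisjoint (.of_eq hcover) hpos hP hJ (mt Finset.coe_eq_univ.mp hJu) (measure_ne_top μ _)
end

section
/- Let (M, 𝔅, μ) be a probability space and f : M → M a measure-preserving measurable map such that μ is ergodic for f. Let V_1, …, V_m be pairwise disjoint measurable sets with ∪_{j=1}^m V_j = M and μ(V_j) > 0 for every j, and define the m × m matrix P by P_{i,j} = μ(f⁻¹(V_i) ∩ V_j) / μ(V_j). Then 1 is an eigenvalue of P (viewed as a linear endomorphism of ℝ^m) and its eigenspace {v ∈ ℝ^m : Pv = v} is one-dimensional. -/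
/-!
The vector `π j = μ (V j)` is positive and, because `f` preserves `μ`, satisfies `P π = π`. If a set
`S` of indices has no transition into it from outside, then `U = ⋃ i ∈ S, V i` satisfies
`f⁻¹ U ⊆ U` up to a null set, so by ergodicity `U` is null or conull; hence `P` is irreducible.

For any other solution of `P v = v`, let `c` be the largest ratio `v j / π j`. Then `c π - v` is a
nonnegative fixed vector with a vanishing entry, and irreducibility makes it zero: if `u ≥ 0` is
fixed and `u a = 0`, then `0 = (P ^ k u) a ≥ (P ^ k) a j * u j` for all `j` and `k`.
-/

open MeasureTheory Module
open scoped Matrix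

section Irreducible

variable {ι R : Type*}

lemma isIrreducible_of_forall_closed_eq_univ [Ring R] [LinearOrder R] {A : Matrix ι ι R}
    (hA : ∀ i j, 0 ≤ A i j) (hrow : ∀ i, ∃ j, 0 < A i j)
    (hclosed : ∀ S : Set ι, S.Nonempty → (∀ i ∈ S, ∀ j, 0 < A i j → j ∈ S) → S = Set.univ) :
    A.IsIrreducible := by
  let : Quiver ι := A.toQuiver
  refine ⟨hA, fun i j => ?_⟩
  let reachable : Set ι := {j | ∃ p : Quiver.Path i j, 0 < p.length}
  suffices h : reachable = Set.univ from h.ge (Set.mem_univ j)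
  refine hclosed reachable ?_ ?_
  · obtain ⟨j, hij⟩ := hrow i
    exact ⟨j, Quiver.Path.nil.cons (PLift.up hij), Nat.succ_pos _⟩
  · rintro j ⟨p, -⟩ k hjk
    exact ⟨p.cons (PLift.up hjk), Nat.succ_pos _⟩

variable [Fintype ι]

lemma pow_mulVec_eq_pow_smul [CommSemiring R] [DecidableEq ι] {A : Matrix ι ι R} {u : ι → R}
    {r : R} (hu : A *ᵥ u = r • u) (k : ℕ) : (A ^ k) *ᵥ u = r ^ k • u := by
  induction k with
  | zero => simp
  | succ k ih =>
    rw [pow_succ, ← Matrix.mulVec_mulVec, hu, Matrix.mulVec_smul, ih, smul_smul, pow_succ']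

lemma eq_zero_of_isIrreducible_of_mulVec_eq_smul [CommRing R] [LinearOrder R]
    [IsStrictOrderedRing R] {A : Matrix ι ι R} (hA : A.IsIrreducible) {u : ι → R} {r : R}
    (hu : A *ᵥ u = r • u) (hu_nonneg : 0 ≤ u) {a : ι} (ha : u a = 0) : u = 0 := by
  classical
  funext j
  obtain ⟨k, -, hk⟩ := (Matrix.isIrreducible_iff_exists_pow_pos hA.nonneg).1 hA a j
  have hsum : ∑ i, (A ^ k) a i * u i = 0 := by
    have hpow := congrFun (pow_mulVec_eq_pow_smul hu k) a
    rwa [Pi.smul_apply, ha, smul_zero] at hpow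
  have hterm : (A ^ k) a j * u j = 0 :=
    (Finset.sum_eq_zero_iff_of_nonneg fun i _ =>
      mul_nonneg (Matrix.pow_apply_nonneg hA.nonneg k a i) (hu_nonneg i)).1 hsum j
        (Finset.mem_univ j)
  exact (mul_eq_zero.1 hterm).resolve_left hk.ne'

theorem eigenspace_eq_span_singleton_of_isIrreducible [Field R] [LinearOrder R]
    [IsStrictOrderedRing R] {A : Matrix ι ι R} (hA : A.IsIrreducible) {p : ι → R} {r : R}
    (hp : A *ᵥ p = r • p) (hp_pos : ∀ i, 0 < p i) :
    End.eigenspace A.mulVecLin r = Submodule.span R {p} := by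
  refine le_antisymm (fun v hv => ?_) ?_
  · rw [End.mem_eigenspace_iff, Matrix.mulVecLin_apply] at hv
    cases isEmpty_or_nonempty ι
    · exact Subsingleton.elim 0 v ▸ Submodule.zero_mem _
    obtain ⟨a, ha⟩ := Finite.exists_max fun j => v j / p j
    have hnonneg : 0 ≤ (v a / p a) • p - v := fun j =>
      sub_nonneg.2 ((div_le_iff₀ (hp_pos j)).1 (ha j))
    have heigen : A *ᵥ ((v a / p a) • p - v) = r • ((v a / p a) • p - v) := by
      rw [Matrix.mulVec_sub, Matrix.mulVec_smul, hp, hv, smul_sub, smul_comm]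
    have hzero : ((v a / p a) • p - v) a = 0 :=
      sub_eq_zero.2 (div_mul_cancel₀ (v a) (hp_pos a).ne')
    have hdiff := eq_zero_of_isIrreducible_of_mulVec_eq_smul hA heigen hnonneg hzero
    exact Submodule.mem_span_singleton.2 ⟨v a / p a, sub_eq_zero.1 hdiff⟩
  · rwa [Submodule.span_singleton_le_iff_mem, End.mem_eigenspace_iff, Matrix.mulVecLin_apply]

end Irreducible

section Partition

variable {M ι : Type*} [MeasurableSpace M] {μ : Measure M} {f : M → M} {V : ι → Set M}

lemma exists_measure_inter_ne_zero [Countable ι] (hcover : (⋃ j, V j) =ᵐ[μ] Set.univ) {s : Set M}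
    (hs : μ s ≠ 0) : ∃ j, μ (s ∩ V j) ≠ 0 := by
  contrapose! hs
  rw [← measure_congr (inter_ae_eq_left_of_ae_eq_univ hcover), Set.inter_iUnion]
  exact measure_iUnion_null hs

lemma sum_measureReal_inter_eq [Fintype ι] [IsFiniteMeasure μ]
    (hmeas : ∀ j, NullMeasurableSet (V j) μ) (hdisj : Pairwise (Function.onFun (AEDisjoint μ) V))
    (hcover : (⋃ j, V j) =ᵐ[μ] Set.univ) (s : Set M) :
    ∑ j, μ.real (s ∩ V j) = μ.real s := by
  have hmeas_s (j : ι) : NullMeasurableSet (V j) (μ.restrict s) :=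
    (hmeas j).mono_ac Measure.absolutelyContinuous_restrict
  have hdisj_s : Pairwise (Function.onFun (AEDisjoint (μ.restrict s)) V) := fun i j hij =>
    (hdisj hij).of_le Measure.restrict_le_self
  calc ∑ j, μ.real (s ∩ V j)
      = ∑ j, (μ.restrict s).real (V j) := Finset.sum_congr rfl fun j _ => by
        rw [measureReal_restrict_apply₀ (hmeas_s j), Set.inter_comm]
    _ = (μ.restrict s).real (⋃ j, V j) := by
        simpa using (measureReal_biUnion_finset₀ (hdisj_s.set_pairwise (Finset.univ : Finset ι))
          fun j _ => hmeas_s j).symm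
    _ = (μ.restrict s).real Set.univ := measureReal_congr (ae_restrict_of_ae hcover)
    _ = μ.real s := by rw [measureReal_restrict_apply_univ]

lemma preimage_biUnion_ae_le [Countable ι] (hcover : (⋃ j, V j) =ᵐ[μ] Set.univ) {S : Set ι}
    (hS : ∀ i ∈ S, ∀ j ∉ S, μ (f ⁻¹' V i ∩ V j) = 0) :
    f ⁻¹' (⋃ i ∈ S, V i) ≤ᵐ[μ] ⋃ i ∈ S, V i := by
  have hnot : ∀ᵐ x ∂μ, ∀ i, ∀ j, i ∈ S → j ∉ S → x ∉ f ⁻¹' V i ∩ V j := by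
    simp only [ae_all_iff]
    exact fun i j hi hj => measure_eq_zero_iff_ae_notMem.1 (hS i hi j hj)
  filter_upwards [hnot, Filter.eventuallyEq_univ.1 hcover] with x hx hxV hfx
  obtain ⟨i, hi, hfxi⟩ := Set.mem_iUnion₂.1 hfx
  obtain ⟨j, hxj⟩ := Set.mem_iUnion.1 hxV
  have hj : j ∈ S := by_contra fun hj => hx i j hi hj ⟨hfxi, hxj⟩
  exact Set.mem_biUnion hj hxj

lemma eq_univ_of_biUnion_ae_eq_univ [Countable ι]
    (hdisj : Pairwise (Function.onFun (AEDisjoint μ) V)) (hpos : ∀ j, 0 < μ (V j)) {S : Set ι}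
    (hS : (⋃ i ∈ S, V i) =ᵐ[μ] Set.univ) : S = Set.univ := by
  refine Set.eq_univ_of_forall fun j => by_contra fun hj => (hpos j).ne' ?_
  have hVj : AEDisjoint μ (V j) (⋃ i ∈ S, V i) :=
    AEDisjoint.iUnion_right_iff.2 fun i => AEDisjoint.iUnion_right_iff.2 fun hi =>
      hdisj fun hji => hj (hji ▸ hi)
  rw [← measure_congr (inter_ae_eq_left_of_ae_eq_univ hS), hVj.eq]

lemma eq_univ_of_measure_preimage_inter_eq_zero [Countable ι] [IsFiniteMeasure μ]
    (herg : Ergodic f μ) (hmeas : ∀ j, NullMeasurableSet (V j) μ)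
    (hdisj : Pairwise (Function.onFun (AEDisjoint μ) V)) (hcover : (⋃ j, V j) =ᵐ[μ] Set.univ)
    (hpos : ∀ j, 0 < μ (V j)) {S : Set ι} (hne : S.Nonempty)
    (hS : ∀ i ∈ S, ∀ j ∉ S, μ (f ⁻¹' V i ∩ V j) = 0) : S = Set.univ := by
  have hU : NullMeasurableSet (⋃ i ∈ S, V i) μ :=
    .biUnion S.to_countable fun i _ => hmeas i
  rcases herg.ae_empty_or_univ_of_preimage_ae_le hU (preimage_biUnion_ae_le hcover hS) with
    hnull | hconull
  · obtain ⟨i, hi⟩ := hne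
    exact absurd (measure_mono_null (Set.subset_biUnion_of_mem hi) (ae_eq_empty.1 hnull))
      (hpos i).ne'
  · exact eq_univ_of_biUnion_ae_eq_univ hdisj hpos hconull

variable (μ f V) in
/-- The transition matrix between the cells of a partition `V`. The column index is the source:
entry `(i, j)` is the conditional probability that `f x ∈ V i` given `x ∈ V j`. A column belonging
to a null cell is zero. -/
noncomputable def partitionTransitionMatrix : Matrix ι ι ℝ :=
  .of fun i j => μ.real (f ⁻¹' V i ∩ V j) / μ.real (V j)

lemma partitionTransitionMatrix_nonneg (i j : ι) : 0 ≤ partitionTransitionMatrix μ f V i j :=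
  div_nonneg measureReal_nonneg measureReal_nonneg

lemma partitionTransitionMatrix_mulVec_measureReal [Fintype ι] [IsFiniteMeasure μ]
    (hf : MeasurePreserving f μ μ) (hmeas : ∀ j, NullMeasurableSet (V j) μ)
    (hdisj : Pairwise (Function.onFun (AEDisjoint μ) V)) (hcover : (⋃ j, V j) =ᵐ[μ] Set.univ) :
    (partitionTransitionMatrix μ f V *ᵥ fun j => μ.real (V j)) = fun j => μ.real (V j) := by
  funext i
  have hcancel (j : ι) : partitionTransitionMatrix μ f V i j * μ.real (V j) =
      μ.real (f ⁻¹' V i ∩ V j) :=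
    div_mul_cancel_of_imp fun hj => measureReal_mono_null Set.inter_subset_right hj
  calc ∑ j, partitionTransitionMatrix μ f V i j * μ.real (V j)
      = ∑ j, μ.real (f ⁻¹' V i ∩ V j) := Finset.sum_congr rfl fun j _ => hcancel j
    _ = μ.real (f ⁻¹' V i) := sum_measureReal_inter_eq hmeas hdisj hcover _
    _ = μ.real (V i) := hf.measureReal_preimage (hmeas i)

lemma partitionTransitionMatrix_pos [IsFiniteMeasure μ] {i j : ι}
    (hij : μ (f ⁻¹' V i ∩ V j) ≠ 0) : 0 < partitionTransitionMatrix μ f V i j :=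
  div_pos (ENNReal.toReal_pos hij (measure_ne_top μ _)) (ENNReal.toReal_pos
    (fun hj => hij (measure_mono_null Set.inter_subset_right hj)) (measure_ne_top μ _))

theorem isIrreducible_partitionTransitionMatrix [Countable ι] [IsFiniteMeasure μ]
    (herg : Ergodic f μ) (hmeas : ∀ j, NullMeasurableSet (V j) μ)
    (hdisj : Pairwise (Function.onFun (AEDisjoint μ) V)) (hcover : (⋃ j, V j) =ᵐ[μ] Set.univ)
    (hpos : ∀ j, 0 < μ (V j)) : (partitionTransitionMatrix μ f V).IsIrreducible := by
  refine isIrreducible_of_forall_closed_eq_univ partitionTransitionMatrix_nonneg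
    (fun i => ?_) fun S hne hclosed => ?_
  · have hpre : μ (f ⁻¹' V i) ≠ 0 := (herg.measure_preimage (hmeas i)).trans_ne (hpos i).ne'
    obtain ⟨j, hj⟩ := exists_measure_inter_ne_zero hcover hpre
    exact ⟨j, partitionTransitionMatrix_pos hj⟩
  · exact eq_univ_of_measure_preimage_inter_eq_zero herg hmeas hdisj hcover hpos hne
      fun i hi j hj => by_contra fun hij => hj (hclosed i hi j (partitionTransitionMatrix_pos hij))

theorem ergodic_partition_matrix_simple_eigenvalue_one_general [Fintype ι] [IsFiniteMeasure μ]
    [NeZero μ] (herg : Ergodic f μ) (hmeas : ∀ j, NullMeasurableSet (V j) μ)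
    (hdisj : Pairwise (Function.onFun (AEDisjoint μ) V)) (hcover : (⋃ j, V j) =ᵐ[μ] Set.univ)
    (hpos : ∀ j, 0 < μ (V j)) :
    End.HasEigenvalue (partitionTransitionMatrix μ f V).mulVecLin 1 ∧
      finrank ℝ (End.eigenspace (partitionTransitionMatrix μ f V).mulVecLin 1) = 1 := by
  let p : ι → ℝ := fun j => μ.real (V j)
  have hp_pos (j : ι) : 0 < p j := ENNReal.toReal_pos (hpos j).ne' (measure_ne_top μ _)
  have hp_ne : p ≠ 0 := by
    obtain ⟨x, hx⟩ := Filter.Eventually.exists (Filter.eventuallyEq_univ.1 hcover)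
    obtain ⟨j, -⟩ := Set.mem_iUnion.1 hx
    exact fun hp => (hp_pos j).ne' (congrFun hp j)
  have hfix : partitionTransitionMatrix μ f V *ᵥ p = (1 : ℝ) • p := by
    rw [one_smul]
    exact partitionTransitionMatrix_mulVec_measureReal herg.toMeasurePreserving hmeas hdisj hcover
  have hspan := eigenspace_eq_span_singleton_of_isIrreducible
    (isIrreducible_partitionTransitionMatrix herg hmeas hdisj hcover hpos) hfix hp_pos
  exact ⟨End.hasEigenvalue_of_hasEigenvector ⟨End.mem_eigenspace_iff.2 hfix, hp_ne⟩,
    hspan ▸ finrank_span_singleton hp_ne⟩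

end Partition

/-- Lemma 4.2: for an ergodic system and a finite measurable partition into cells of
positive measure, the transition matrix `P i j = μ(f⁻¹ V_i ∩ V_j) / μ(V_j)` has `1` as an
eigenvalue, and the corresponding eigenspace is one-dimensional. -/
theorem ergodic_partition_matrix_simple_eigenvalue_one
    {M : Type*} [MeasurableSpace M] (μ : Measure M) [IsProbabilityMeasure μ]
    (f : M → M) (herg : Ergodic f μ)
    {m : ℕ} (V : Fin m → Set M) (hmeas : ∀ j, MeasurableSet (V j))
    (hdisj : Pairwise (Function.onFun Disjoint V))
    (hcover : (⋃ j, V j) = Set.univ)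
    (hpos : ∀ j, 0 < μ (V j))
    (P : Matrix (Fin m) (Fin m) ℝ)
    (hP : ∀ i j, P i j = (μ (f ⁻¹' V i ∩ V j)).toReal / (μ (V j)).toReal) :
    Module.End.HasEigenvalue (Matrix.mulVecLin P) 1 ∧
      Module.finrank ℝ (Module.End.eigenspace (Matrix.mulVecLin P) 1) = 1 := by
  obtain rfl : P = partitionTransitionMatrix μ f V := Matrix.ext hP
  exact ergodic_partition_matrix_simple_eigenvalue_one_general herg
    (fun j => (hmeas j).nullMeasurableSet) (fun _ _ hij => (hdisj hij).aedisjoint)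
    (.of_eq hcover) hpos
end
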